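/- Let n ∈ ℕ, z ∈ ℝⁿ and u ∈ Iⁿ, and write 𝕋 = {−1, 0, 1}. If ‖z*‖² ≥ min_{v ∈ L·𝕋ⁿ} ‖z* + u + v‖², then ‖z‖² ≥ min_{ṽ ∈ L·𝕋ⁿ} ‖z + u + ṽ‖². (Here L·𝕋ⁿ is the set of vectors in ℝⁿ each of whose coordinates lies in {−L, 0, L}, and ‖·‖ is the Euclidean norm.) -/

import Mathlib

open MeasureTheory ProbabilityTheory Real Filter
open scoped ENNReal

noncomputable section

/-- Reduction of `x` modulo the half-open interval `[a, b)`. -/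
def modIco (a b x : ℝ) : ℝ := a + (b - a) * Int.fract ((x - a) / (b - a))

/-- `L = √12`. -/
def Lc : ℝ := Real.sqrt 12

/-- `x*`: reduction of `x` modulo the basic interval `I = [-L/2, L/2)`. -/
def starI (x : ℝ) : ℝ := modIco (-(Lc / 2)) (Lc / 2) x

/-- `δ(p, γ) = min_{l ∈ {1,…,p−1}} |l·γ − ⌊l·γ⌉|`. -/
def deltaP (p : ℕ) (γ : ℝ) : ℝ :=
  sInf {d : ℝ | ∃ l : ℕ, 1 ≤ l ∧ l ≤ p - 1 ∧ d = |(l : ℝ) * γ - round ((l : ℝ) * γ)|}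

/-- The set `P'(γ)` of admissible primes (depends on the SNR). -/
def Pgood (SNR : ℝ) (γ : ℝ) : Set ℕ :=
  {p | p.Prime ∧
    Real.exp (-(3 * SNR / (2 * (p : ℝ) ^ 2)) * (modIco (-(1/4)) (1/4) γ) ^ 2) <
      1 - 2 * (p : ℝ) * Real.exp (-(3 * SNR / 8))}

/-- First rate expression in the achievable-rate theorem. -/
def rateA (SNR : ℝ) (p : ℕ) (γ : ℝ) : ℝ :=
  -(1/2) * Real.logb 2 (1/(p : ℝ)^2 + Real.sqrt (2 * π / (3 * SNR))
    + (1/(p : ℝ)) * Real.exp (-(3 * SNR / (2 * (p : ℝ)^2)) * (deltaP p γ)^2)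
    + 2 * Real.exp (-(3 * SNR / 8)))

/-- Second rate expression in the achievable-rate theorem. -/
def rateB (SNR : ℝ) (p : ℕ) (γ : ℝ) : ℝ :=
  -Real.logb 2 (1/(p : ℝ) + Real.sqrt (2 * π / (3 * (deltaP p γ)^2 * SNR))
    + 2 * Real.exp (-(3 * SNR / 8)))

/-- The `k`-th point of the constellation `Λ_p`. -/
def constPt (p : ℕ) (k : ℕ) : ℝ := starI (Lc / (p : ℝ) * (k : ℝ))

/-- The constellation `Λ_p` as a finite set of reals. -/
def constSet (p : ℕ) : Finset ℝ := (Finset.range p).image (constPt p)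

/-- The uniform probability measure on the constellation `Λ_p`. -/
def uniformConst (p : ℕ) : Measure ℝ :=
  (p : ℝ≥0∞)⁻¹ • ∑ k ∈ Finset.range p, Measure.dirac (constPt p k)

/-!
Per coordinate, the gain `x² - (x + w)²` from moving by `w` is affine in the base point `x`,
decreasing if `w ≥ 0` and increasing if `w ≤ 0`. A move by `w ∈ [0, L]` from `s ≥ -L/2` thus gains
at most as much as from `-L/2`. From there it reaches the same point as a move by `w - L ≤ 0` from
`L/2`, which in turn gains at most as much as from any `z ≥ L/2`. A move by `w ∈ [L, 2L]` from `s`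
gains at most as much as the one by `w - L`, which reduces it to the previous case; `z < z*` is the
mirror image of `z > z*`. So every shift used at `z*` can be answered, coordinate by coordinate, by
a shift at `z` that gains at least as much.
-/

section Gain

variable {R : Type*} [CommRing R] [LinearOrder R] [IsStrictOrderedRing R] {w : R}

lemma antitone_sq_sub_add_sq (hw : 0 ≤ w) : Antitone fun x : R ↦ x ^ 2 - (x + w) ^ 2 := by
  intro x y hxy
  linear_combination 2 * mul_le_mul_of_nonneg_left hxy hw

lemma monotone_sq_sub_add_sq (hw : w ≤ 0) : Monotone fun x : R ↦ x ^ 2 - (x + w) ^ 2 := by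
  intro x y hxy
  linear_combination 2 * mul_le_mul_of_nonpos_left hxy hw

end Gain

section Shift

variable {K : Type*} [Field K] [LinearOrder K] [IsStrictOrderedRing K] {L s z u v w : K}

lemma sq_sub_add_sq_le_sub_period (hs : -(L / 2) ≤ s) (hz : L / 2 ≤ z) (hw : 0 ≤ w)
    (hwL : w ≤ L) : s ^ 2 - (s + w) ^ 2 ≤ z ^ 2 - (z + (w - L)) ^ 2 :=
  calc
    s ^ 2 - (s + w) ^ 2 ≤ (-(L / 2)) ^ 2 - (-(L / 2) + w) ^ 2 := antitone_sq_sub_add_sq hw hs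
    _ = (L / 2) ^ 2 - (L / 2 + (w - L)) ^ 2 := by ring
    _ ≤ z ^ 2 - (z + (w - L)) ^ 2 := monotone_sq_sub_add_sq (sub_nonpos.2 hwL) hz

lemma sq_sub_add_sq_le_sub_two_periods (hs : -(L / 2) ≤ s) (hz : L / 2 ≤ z) (hw : L ≤ w)
    (hwL : w ≤ 2 * L) : s ^ 2 - (s + w) ^ 2 ≤ z ^ 2 - (z + (w - L - L)) ^ 2 := by
  have closer : (s + (w - L)) ^ 2 ≤ (s + w) ^ 2 := by apply sq_le_sq' <;> linarith
  calc
    s ^ 2 - (s + w) ^ 2 ≤ s ^ 2 - (s + (w - L)) ^ 2 := sub_le_sub_left closer _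
    _ ≤ z ^ 2 - (z + (w - L - L)) ^ 2 :=
      sq_sub_add_sq_le_sub_period hs hz (sub_nonneg.2 hw) (by linarith)

lemma exists_shift_sq_sub_add_sq_le_of_add_le (hL : 0 ≤ L) (hs : -(L / 2) ≤ s)
    (hz : s + L ≤ z) (hu : u ≤ L) (hv : v ∈ ({-L, 0, L} : Set K)) :
    ∃ v' ∈ ({-L, 0, L} : Set K), s ^ 2 - (s + u + v) ^ 2 ≤ z ^ 2 - (z + u + v') ^ 2 := by
  have hsz : s ≤ z := by linarith
  have hLz : L / 2 ≤ z := by linarith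
  simp only [add_assoc]
  obtain hw | hw := le_total (u + v) 0
  · exact ⟨v, hv, monotone_sq_sub_add_sq hw hsz⟩
  rcases hv with rfl | rfl | (hvL : v = L)
  · exact ⟨-L, by simp, monotone_sq_sub_add_sq (by linarith) hsz⟩
  · refine ⟨-L, by simp, ?_⟩
    simpa [sub_eq_add_neg] using sq_sub_add_sq_le_sub_period hs hLz hw (by linarith)
  · subst v
    obtain hu₀ | hu₀ := le_total u 0
    · refine ⟨0, by simp, ?_⟩
      simpa using sq_sub_add_sq_le_sub_period hs hLz hw (by linarith)
    · refine ⟨-L, by simp, ?_⟩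
      simpa [sub_eq_add_neg] using sq_sub_add_sq_le_sub_two_periods hs hLz
        (w := u + L) (by linarith) (by linarith)

lemma exists_shift_sq_sub_add_sq_le_of_modEq (hs : |s| ≤ L / 2) (hsz : s ≡ z [PMOD L])
    (hu : |u| ≤ L) (hv : v ∈ ({-L, 0, L} : Set K)) :
    ∃ v' ∈ ({-L, 0, L} : Set K), s ^ 2 - (s + u + v) ^ 2 ≤ z ^ 2 - (z + u + v') ^ 2 := by
  have hL : 0 ≤ L := (abs_nonneg u).trans hu
  obtain ⟨hLs, hsL⟩ := abs_le.1 hs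
  obtain ⟨k, hk⟩ := AddCommGroup.modEq_iff_zsmul.1 hsz
  obtain hk₀ | rfl | hk₀ := lt_trichotomy k 0
  · have hzs : -s + L ≤ -z := by
      have := zsmul_le_zsmul_left hL (show k ≤ -1 by lia)
      rw [hk, neg_one_zsmul] at this
      linarith
    have hv_neg : -v ∈ ({-L, 0, L} : Set K) := by
      rcases hv with rfl | rfl | rfl <;> simp
    obtain ⟨v', hv', hle⟩ := exists_shift_sq_sub_add_sq_le_of_add_le hL (neg_le_neg hsL) hzs
      ((neg_le_abs u).trans hu) hv_neg
    refine ⟨-v', by rcases hv' with rfl | rfl | rfl <;> simp, ?_⟩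
    linear_combination hle
  · obtain rfl : z = s := by simpa [eq_comm, sub_eq_zero] using hk
    exact ⟨v, hv, le_rfl⟩
  · have hzs : s + L ≤ z := by
      have := zsmul_le_zsmul_left hL (show 1 ≤ k by lia)
      rw [hk, one_zsmul] at this
      linarith
    exact exists_shift_sq_sub_add_sq_le_of_add_le hL hLs hzs ((le_abs_self u).trans hu) hv

theorem modulo_lemma_general {ι : Type*} [Fintype ι] {s z u : ι → K} (hs : ∀ t, |s t| ≤ L / 2)
    (hsz : ∀ t, s t ≡ z t [PMOD L]) (hu : ∀ t, |u t| ≤ L)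
    (h : ∃ v : ι → K, (∀ t, v t ∈ ({-L, 0, L} : Set K)) ∧
      ∑ t, (s t + u t + v t) ^ 2 ≤ ∑ t, s t ^ 2) :
    ∃ v' : ι → K, (∀ t, v' t ∈ ({-L, 0, L} : Set K)) ∧
      ∑ t, (z t + u t + v' t) ^ 2 ≤ ∑ t, z t ^ 2 := by
  obtain ⟨v, hv, hle⟩ := h
  choose v' hv' hgain using fun t ↦
    exists_shift_sq_sub_add_sq_le_of_modEq (hs t) (hsz t) (hu t) (hv t)
  refine ⟨v', hv', sub_nonneg.1 ?_⟩
  calc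
    0 ≤ ∑ t, s t ^ 2 - ∑ t, (s t + u t + v t) ^ 2 := sub_nonneg.2 hle
    _ = ∑ t, (s t ^ 2 - (s t + u t + v t) ^ 2) := Finset.sum_sub_distrib .. |>.symm
    _ ≤ ∑ t, (z t ^ 2 - (z t + u t + v' t) ^ 2) := Finset.sum_le_sum fun t _ ↦ hgain t
    _ = ∑ t, z t ^ 2 - ∑ t, (z t + u t + v' t) ^ 2 := Finset.sum_sub_distrib ..

end Shift

section Reduction

variable {a b : ℝ}

lemma modIco_eq_toIcoMod (hab : a < b) (x : ℝ) :
    modIco a b x = toIcoMod (sub_pos.2 hab) a x := by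
  rw [modIco, toIcoMod_eq_add_fract_mul, mul_comm]

lemma modIco_mem_Ico (hab : a < b) (x : ℝ) : modIco a b x ∈ Set.Ico a b := by
  simpa [modIco_eq_toIcoMod hab] using toIcoMod_mem_Ico (sub_pos.2 hab) a x

lemma modIco_modEq (hab : a < b) (x : ℝ) : modIco a b x ≡ x [PMOD b - a] := by
  rw [modIco_eq_toIcoMod hab]
  exact AddCommGroup.modEq_iff_zsmul'.2 ⟨_, self_sub_toIcoMod (sub_pos.2 hab) a x⟩

lemma Lc_pos : 0 < Lc := Real.sqrt_pos.2 (by norm_num)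

lemma neg_half_Lc_lt_half_Lc : -(Lc / 2) < Lc / 2 := neg_lt_self (half_pos Lc_pos)

lemma abs_starI_le (x : ℝ) : |starI x| ≤ Lc / 2 :=
  abs_le.2 (Set.Ico_subset_Icc_self (modIco_mem_Ico neg_half_Lc_lt_half_Lc x))

lemma starI_modEq (x : ℝ) : starI x ≡ x [PMOD Lc] := by
  simpa [starI] using modIco_modEq neg_half_Lc_lt_half_Lc x

end Reduction

/-- **Lemma 1.** If the folded noise `z*` is closer (in the modulo sense, over shifts in
`L·𝕋ⁿ`) to `z* + u` than to the origin, the same holds for the unfolded noise `z`. -/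
theorem modulo_lemma (n : ℕ) (z u : Fin n → ℝ)
    (hu : ∀ t, u t ∈ Set.Ico (-(Lc / 2)) (Lc / 2))
    (h : ∃ v : Fin n → ℝ, (∀ t, v t = -Lc ∨ v t = 0 ∨ v t = Lc) ∧
        ∑ t, (starI (z t)) ^ 2 ≥ ∑ t, (starI (z t) + u t + v t) ^ 2) :
    ∃ v' : Fin n → ℝ, (∀ t, v' t = -Lc ∨ v' t = 0 ∨ v' t = Lc) ∧
      ∑ t, (z t) ^ 2 ≥ ∑ t, (z t + u t + v' t) ^ 2 :=
  modulo_lemma_general (fun t ↦ abs_starI_le (z t)) (fun t ↦ starI_modEq (z t))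
    (fun t ↦ (abs_le.2 (Set.Ico_subset_Icc_self (hu t))).trans (half_le_self Lc_pos.le)) h
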